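/- arXiv:1708.02438 — 10 statements merged into one kernel-verified Lean document; each statement's English description precedes it below -/
import Mathlib

section
/- Let G be a simple graph on vertex set {1,…,n}, let M ∈ S(G), and let j be a vertex with M_{jj} = 0. Let H be the simple graph on {1,…,n+1} obtained from G by cloning j without an edge, i.e., the new vertex n+1 is adjacent in H exactly to the neighbors of j in G (in particular n+1 is not adjacent to j), and all adjacencies among {1,…,n} are as in G. Then there exists a matrix N ∈ S(H) whose characteristic polynomial equals X times the characteristic polynomial of M; in particular N has the same nonzero eigenvalues as M with the same multiplicities, and the multiplicity of the eigenvalue 0 increases by one. -/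
/-!
The new matrix is `N = P * M * Pᵀ`, where `P` is the `(n+1) × n` matrix with orthonormal columns
obtained from the identity by splitting the unit row `e_j` into `(3/5) e_j` (kept at index `j`) and
`(4/5) e_j` (at the new index). As `Pᵀ * P = 1`, the identity relating the characteristic
polynomials of `P * (M * Pᵀ)` and `(M * Pᵀ) * P = M` gives `N.charpoly = X * M.charpoly`.
Entrywise, `N a b` is a nonzero multiple of `M (φ a) (φ b)`, where `φ` sends the new vertex to `j`
and every old vertex to itself; the assumption `M j j = 0` makes the entry between `j` and its clone
vanish, as it must since these two vertices are not adjacent.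
-/

open Polynomial Matrix

/-- `M ∈ S(G)`: real symmetric matrix whose off-diagonal nonzero pattern is
given exactly by the adjacency of `G`. -/
def inS {V : Type*} (G : SimpleGraph V) (M : Matrix V V ℝ) : Prop :=
  M.IsSymm ∧ ∀ i j : V, i ≠ j → (M i j ≠ 0 ↔ G.Adj i j)

/-- The map collapsing the clone (the last index) onto `j` and fixing the old vertices. -/
def cloneProj {n : ℕ} (j : Fin n) : Fin (n + 1) → Fin n :=
  Fin.lastCases j id

/-- The weights `3/5` at `j`, `4/5` at its clone and `1` elsewhere: on each fibre of `cloneProj j`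
the squares sum to `1`, and no weight vanishes. -/
noncomputable def cloneWeight {n : ℕ} (j : Fin n) : Fin (n + 1) → ℝ :=
  Fin.lastCases (4 / 5) (fun i => if i = j then 3 / 5 else 1)

/-- The isometry from `ℝⁿ` to `ℝⁿ⁺¹` splitting the `j`-th basis vector between `j` and its
clone. -/
noncomputable def cloneIsometry {n : ℕ} (j : Fin n) : Matrix (Fin (n + 1)) (Fin n) ℝ :=
  Matrix.of fun a i => if cloneProj j a = i then cloneWeight j a else 0

lemma cloneWeight_ne_zero {n : ℕ} (j : Fin n) (a : Fin (n + 1)) : cloneWeight j a ≠ 0 := by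
  induction a using Fin.lastCases with
  | last => simp [cloneWeight]
  | cast i => simp only [cloneWeight, Fin.lastCases_castSucc]; split_ifs <;> norm_num

lemma cloneIsometry_transpose_mul_self {n : ℕ} (j : Fin n) :
    (cloneIsometry j)ᵀ * cloneIsometry j = 1 := by
  ext i k
  rw [Matrix.mul_apply, Fin.sum_univ_castSucc]
  simp only [Matrix.transpose_apply, cloneIsometry, Matrix.of_apply, cloneProj, cloneWeight,
    Fin.lastCases_castSucc, Fin.lastCases_last, id, ite_mul, zero_mul, Finset.sum_ite_eq',
    Finset.mem_univ, if_true, Matrix.one_apply]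
  by_cases hik : i = k
  · subst hik
    by_cases hij : i = j
    · subst hij; norm_num
    · simp [hij, Ne.symm hij]
  · by_cases hij : j = i
    · subst hij; simp [hik]
    · simp [hik, hij]

lemma cloneIsometry_conj_apply {n : ℕ} (j : Fin n) (M : Matrix (Fin n) (Fin n) ℝ)
    (a b : Fin (n + 1)) :
    (cloneIsometry j * (M * (cloneIsometry j)ᵀ)) a b =
      cloneWeight j a * (M (cloneProj j a) (cloneProj j b) * cloneWeight j b) := by
  simp [Matrix.mul_apply, cloneIsometry]

lemma charpoly_cloneIsometry_conj {n : ℕ} (j : Fin n) (M : Matrix (Fin n) (Fin n) ℝ) :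
    (cloneIsometry j * (M * (cloneIsometry j)ᵀ)).charpoly = X * M.charpoly := by
  have h := Matrix.charpoly_mul_comm' (cloneIsometry j) (M * (cloneIsometry j)ᵀ)
  rw [Matrix.mul_assoc M, cloneIsometry_transpose_mul_self, Matrix.mul_one, Fintype.card_fin,
    Fintype.card_fin, pow_succ, mul_assoc] at h
  exact mul_left_cancel₀ (pow_ne_zero n X_ne_zero) h

/-- In a graph on which the last vertex is a clone of `j` without an edge, adjacency is pulled
back along `cloneProj j`. -/
lemma adj_iff_adj_cloneProj {n : ℕ} {G : SimpleGraph (Fin n)} {j : Fin n}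
    {H : SimpleGraph (Fin (n + 1))}
    (hold : ∀ i k : Fin n, H.Adj i.castSucc k.castSucc ↔ G.Adj i k)
    (hnew : ∀ i : Fin n, H.Adj (Fin.last n) i.castSucc ↔ G.Adj j i) (a b : Fin (n + 1)) :
    H.Adj a b ↔ G.Adj (cloneProj j a) (cloneProj j b) := by
  induction a using Fin.lastCases with
  | last =>
    induction b using Fin.lastCases with
    | last => simp
    | cast k => simpa [cloneProj] using hnew k
  | cast i =>
    induction b using Fin.lastCases with
    | last => simpa [cloneProj, H.adj_comm, G.adj_comm] using hnew i
    | cast k => simpa [cloneProj] using hold i k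

/-- Two distinct vertices with the same image under `cloneProj j` are `j` and its clone. -/
lemma cloneProj_eq_of_ne {n : ℕ} {j : Fin n} {a b : Fin (n + 1)} (hab : a ≠ b)
    (h : cloneProj j a = cloneProj j b) : cloneProj j a = j := by
  induction a using Fin.lastCases with
  | last => simp [cloneProj]
  | cast i =>
    induction b using Fin.lastCases with
    | last => simpa [cloneProj] using h
    | cast k => exact absurd (by simpa [cloneProj] using h) (fun e : i = k => hab (e ▸ rfl))

theorem clone_without_edge {n : ℕ} (G : SimpleGraph (Fin n))
    (M : Matrix (Fin n) (Fin n) ℝ) (hM : inS G M) (j : Fin n) (hjj : M j j = 0)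
    (H : SimpleGraph (Fin (n + 1)))
    (hold : ∀ i k : Fin n, H.Adj i.castSucc k.castSucc ↔ G.Adj i k)
    (hnew : ∀ i : Fin n, H.Adj (Fin.last n) i.castSucc ↔ G.Adj j i) :
    ∃ N : Matrix (Fin (n + 1)) (Fin (n + 1)) ℝ,
      inS H N ∧ N.charpoly = X * M.charpoly := by
  refine ⟨cloneIsometry j * (M * (cloneIsometry j)ᵀ), ⟨?_, fun a b hab => ?_⟩,
    charpoly_cloneIsometry_conj j M⟩
  · ext a b
    rw [Matrix.transpose_apply, cloneIsometry_conj_apply, cloneIsometry_conj_apply,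
      hM.1.apply]
    ring
  · rw [cloneIsometry_conj_apply, adj_iff_adj_cloneProj hold hnew]
    simp only [ne_eq, mul_eq_zero, cloneWeight_ne_zero, false_or, or_false]
    by_cases h : cloneProj j a = cloneProj j b
    · -- Here `a` and `b` are `j` and its clone, so the entry is a multiple of `M j j`.
      rw [← h, cloneProj_eq_of_ne hab h]
      simp [hjj]
    · exact hM.2 _ _ h
end

section
/- Let G be a simple graph on vertex set {1,…,n} with no isolated vertices, let M ∈ S(G), and let λ be the smallest eigenvalue of M. For any vertex j, let H be the simple graph on {1,…,n+1} obtained from G by cloning j with an edge, i.e., the new vertex n+1 is adjacent in H to j and to every neighbor of j in G, and all adjacencies among {1,…,n} are as in G. Then there exists a matrix N ∈ S(H) whose characteristic polynomial equals (X − λ) times the characteristic polynomial of M; in particular, if M has ordered multiplicity list (m_1,…,m_k), then N has ordered multiplicity list (m_1 + 1, m_2, …, m_k). -/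
/-!
Put `A = M - lam • 1`. Since `lam` is the smallest eigenvalue, `A` is positive semidefinite,
and because `j` has a neighbour its row in `A` is nonzero, hence `A j j ≠ 0`: a positive
semidefinite matrix with a zero diagonal entry has a zero row there
(`PosSemidef.apply_eq_zero_of_diag`).

Let `R` be the `n × (n + 1)` matrix obtained from the identity by splitting the column `e_j` into
two proportional columns `(3/5) e_j` and `(4/5) e_j`, the second one placed last. As
`(3/5)² + (4/5)² = 1`, we have `R * Rᵀ = 1`. The matrix `N = Rᵀ * A * R + lam • 1` satisfies
`N.charpoly = (X - C lam) * M.charpoly`: the matrices `Rᵀ * (A * R)` and `(A * R) * Rᵀ = A` have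
the same characteristic polynomial up to a factor `X`, and shifting by `lam` turns that factor
into `X - C lam`. The off-diagonal entries of `N` are nonzero multiples of the entries of `A`
with the new index read as `j`. In particular the entry between the new index and `j` is
a nonzero multiple of `A j j`, so it does not vanish, and `N` has the pattern of `H`.
-/

open Polynomial Matrix

/-- A zero on the diagonal of a positive semidefinite matrix forces the whole column to vanish, since
`e_jᵀ A e_j = 0` implies `A e_j = 0`. -/
lemma Matrix.PosSemidef.apply_eq_zero_of_diag {n : ℕ} {A : Matrix (Fin n) (Fin n) ℝ}
    (hA : A.PosSemidef) {j : Fin n} (h : A j j = 0) (i : Fin n) : A i j = 0 := by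
  have h1 := (hA.dotProduct_mulVec_zero_iff (Pi.single j 1)).1 (by simpa using h)
  simpa using congrFun h1 i

lemma posSemidef_sub_smallest {n : ℕ} {M : Matrix (Fin n) (Fin n) ℝ} (hM : M.IsSymm)
    {lam : ℝ} (hmin : ∀ mu : ℝ, M.charpoly.IsRoot mu → lam ≤ mu) :
    (M - scalar (Fin n) lam).PosSemidef := by
  have hH : (M - scalar (Fin n) lam).IsHermitian := by
    rw [isHermitian_iff_isSymm]
    exact hM.sub (by simp [Matrix.IsSymm])
  rw [hH.posSemidef_iff_eigenvalues_nonneg]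
  intro i
  have h1 := hH.eigenvalues_mem_spectrum_real i
  rw [mem_spectrum_iff_isRoot_charpoly, charpoly_sub_scalar] at h1
  have h2 := hmin (hH.eigenvalues i + lam) (by simpa [IsRoot.def, eval_comp] using h1)
  simpa using h2

/-- Sends the new index to the vertex `j` it clones and fixes every old index. -/
def cloneIdx {n : ℕ} (j : Fin n) : Fin (n + 1) → Fin n :=
  Fin.lastCases j id

/-- The factor by which each column is scaled: `3/5` at the cloned vertex, `4/5` at the new one
and `1` elsewhere. Any two nonzero factors whose squares sum to `1` would do in place of
`3/5` and `4/5`. -/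
noncomputable def cloneWt {n : ℕ} (j : Fin n) : Fin (n + 1) → ℝ :=
  Fin.lastCases (4 / 5) (fun i => if i = j then 3 / 5 else 1)

/-- The `n × (n + 1)` co-isometry whose column `p` is `cloneWt j p` times the standard basis
vector at `cloneIdx j p`. -/
noncomputable def cloneMat {n : ℕ} (j : Fin n) : Matrix (Fin n) (Fin (n + 1)) ℝ :=
  of fun i p => if i = cloneIdx j p then cloneWt j p else 0

lemma cloneWt_ne_zero {n : ℕ} (j : Fin n) (p : Fin (n + 1)) : cloneWt j p ≠ 0 := by
  induction p using Fin.lastCases with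
  | last => simp [cloneWt]
  | cast i => simp only [cloneWt, Fin.lastCases_castSucc]; split_ifs <;> norm_num

lemma cloneMat_mul_transpose {n : ℕ} (j : Fin n) : cloneMat j * (cloneMat j)ᵀ = 1 := by
  ext i k
  simp only [cloneMat, mul_apply, transpose_apply, of_apply, Fin.sum_univ_castSucc, cloneIdx,
    cloneWt, Fin.lastCases_castSucc, Fin.lastCases_last, id, one_apply]
  simp only [ite_mul, zero_mul, Finset.sum_ite_eq, Finset.mem_univ, if_true]
  split_ifs <;> grind

lemma cloneMat_conj_apply {n : ℕ} (j : Fin n) (A : Matrix (Fin n) (Fin n) ℝ)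
    (p q : Fin (n + 1)) :
    ((cloneMat j)ᵀ * (A * cloneMat j)) p q =
      cloneWt j p * cloneWt j q * A (cloneIdx j p) (cloneIdx j q) := by
  simp [cloneMat, mul_apply]
  ring

lemma cloneMat_conj_charpoly {n : ℕ} (j : Fin n) (A : Matrix (Fin n) (Fin n) ℝ) :
    ((cloneMat j)ᵀ * (A * cloneMat j)).charpoly = X * A.charpoly := by
  have h := charpoly_mul_comm' (cloneMat j)ᵀ (A * cloneMat j)
  rw [Matrix.mul_assoc, cloneMat_mul_transpose, Matrix.mul_one] at h
  simp only [Fintype.card_fin, pow_succ, mul_assoc] at h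
  exact mul_left_cancel₀ (pow_ne_zero n X_ne_zero) h

theorem clone_with_edge_smallest_eigenvalue {n : ℕ} (G : SimpleGraph (Fin n))
    (hiso : ∀ v : Fin n, ∃ w : Fin n, G.Adj v w)
    (M : Matrix (Fin n) (Fin n) ℝ) (hM : inS G M)
    (lam : ℝ) (hroot : M.charpoly.IsRoot lam)
    (hmin : ∀ mu : ℝ, M.charpoly.IsRoot mu → lam ≤ mu)
    (j : Fin n)
    (H : SimpleGraph (Fin (n + 1)))
    (hold : ∀ i k : Fin n, H.Adj i.castSucc k.castSucc ↔ G.Adj i k)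
    (hnew : ∀ i : Fin n, H.Adj (Fin.last n) i.castSucc ↔ (G.Adj j i ∨ i = j)) :
    ∃ N : Matrix (Fin (n + 1)) (Fin (n + 1)) ℝ,
      inS H N ∧ N.charpoly = (X - C lam) * M.charpoly := by
  set A := M - scalar (Fin n) lam with hA
  have hpsd : A.PosSemidef := posSemidef_sub_smallest hM.1 hmin
  have hAoff : ∀ i k, i ≠ k → A i k = M i k := fun i k h => by simp [hA, h]
  have hAjj : A j j ≠ 0 := by
    intro h0
    obtain ⟨w, hw⟩ := hiso j
    have h1 := hpsd.apply_eq_zero_of_diag h0 w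
    rw [hAoff w j hw.ne'] at h1
    exact (hM.2 w j hw.ne').2 hw.symm h1
  have hAsymm : ∀ i k, A i k = A k i := fun i k => by
    simpa using hpsd.1.apply k i
  let B := (cloneMat j)ᵀ * (A * cloneMat j)
  have hB : ∀ p q, B p q = cloneWt j p * cloneWt j q * A (cloneIdx j p) (cloneIdx j q) :=
    cloneMat_conj_apply j A
  have hBsymm : ∀ p q, B p q = B q p := fun p q => by
    rw [hB, hB, hAsymm]; ring
  have hBne : ∀ p q, B p q ≠ 0 ↔ A (cloneIdx j p) (cloneIdx j q) ≠ 0 := fun p q => by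
    rw [hB]; simp [cloneWt_ne_zero]
  have hlast : ∀ i : Fin n, B (Fin.last n) i.castSucc ≠ 0 ↔ H.Adj (Fin.last n) i.castSucc := by
    intro i
    rw [hBne, hnew]
    simp only [cloneIdx, Fin.lastCases_last, Fin.lastCases_castSucc, id]
    rcases eq_or_ne i j with rfl | hij
    · simp [hAjj]
    · rw [hAoff j i hij.symm, hM.2 j i hij.symm]
      simp [hij]
  -- Adding `lam • 1` is written as subtracting `-lam` to match `charpoly_sub_scalar`.
  refine ⟨B - scalar (Fin (n + 1)) (-lam), ⟨?_, ?_⟩, ?_⟩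
  · ext p q
    rw [transpose_apply, Matrix.sub_apply, Matrix.sub_apply, hBsymm q p]
    simp [diagonal_apply, eq_comm]
  · intro p q hpq
    have hoff : (B - scalar (Fin (n + 1)) (-lam)) p q = B p q := by simp [hpq]
    rw [hoff]
    induction p using Fin.lastCases with
    | last =>
      induction q using Fin.lastCases with
      | last => exact absurd rfl hpq
      | cast k => exact hlast k
    | cast i =>
      induction q using Fin.lastCases with
      | last => rw [hBsymm, H.adj_comm]; exact hlast i
      | cast k =>
        have hik : i ≠ k := fun h => hpq (by rw [h])
        rw [hBne, hold]
        simp only [cloneIdx, Fin.lastCases_castSucc, id]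
        rw [hAoff i k hik, hM.2 i k hik]
  · rw [charpoly_sub_scalar, cloneMat_conj_charpoly, hA, charpoly_sub_scalar]
    simp [mul_comp, comp_assoc, sub_eq_add_neg]
end

section
/- Let G be a simple graph on vertex set {1,…,n}, let S be a real symmetric r×r matrix, and let Q be a real r×n matrix such that M = QᵀSQ belongs to S(G) and the eigenvalue 0 of M has multiplicity exactly n − r. Suppose a ≠ b are vertices such that the column of Q indexed by b equals α times the column of Q indexed by a for some nonzero real α. Then there exists a matrix N ∈ S(G − a), where G − a is the induced subgraph of G on the vertices other than a, such that the characteristic polynomial of M equals X times the characteristic polynomial of N; in particular N has the same nonzero eigenvalues as M with the same multiplicities, and the multiplicity of 0 decreases by one. -/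
/-!
Proportional columns of `Q` make rows and columns `a`, `b` of `M = Qᵀ * S * Q` proportional.
The idea is to merge `a` into `b` isometrically: let `P` be the matrix, with rows indexed by the
vertices other than `a`, whose row at `v ≠ b` is the basis vector `e_v`, and whose row at `b` is the
unit vector `c⁻¹ • (e_b + α⁻¹ • e_a)`, where `c ^ 2 = 1 + α⁻¹ ^ 2`. Its rows are orthonormal, so
`P * Pᵀ = 1`, and `M = Pᵀ * N * P`, where `N` is `M` with `a` deleted and the row and column of `b`
rescaled by `c`. Since `c ≠ 0`, the rescaling preserves the nonzero pattern. Comparing the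
characteristic polynomials of `Pᵀ * (N * P)` and `(N * P) * Pᵀ = N` gives the factor `X`
(`charpoly_eq_X_mul_of_isometry`).
-/

open Polynomial Matrix

/-- When `P` has orthonormal rows, `Pᵀ` is an isometric embedding, here of codimension one, and
`Pᵀ * N * P` acts as `N` on its range and as `0` on the orthogonal complement. -/
theorem charpoly_eq_X_mul_of_isometry {m k : Type*} [Fintype m] [DecidableEq m]
    [Fintype k] [DecidableEq k] (hcard : Fintype.card m = Fintype.card k + 1)
    (N : Matrix k k ℝ) (P : Matrix k m ℝ) (hP : P * Pᵀ = 1) :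
    (Pᵀ * N * P).charpoly = X * N.charpoly := by
  have h := Matrix.charpoly_mul_comm' Pᵀ (N * P)
  rw [Matrix.mul_assoc N, hP, Matrix.mul_one, ← Matrix.mul_assoc, hcard, pow_succ, mul_assoc] at h
  exact mul_left_cancel₀ (pow_ne_zero _ X_ne_zero) h

theorem decloning {n r : ℕ} (G : SimpleGraph (Fin n))
    (S : Matrix (Fin r) (Fin r) ℝ) (hS : S.IsSymm)
    (Q : Matrix (Fin r) (Fin n) ℝ)
    (hM : inS G (Qᵀ * S * Q))
    (hmult : (Qᵀ * S * Q).charpoly.rootMultiplicity 0 = n - r)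
    (a b : Fin n) (hab : a ≠ b) (α : ℝ) (hα : α ≠ 0)
    (hcol : ∀ i : Fin r, Q i b = α * Q i a) :
    ∃ N : Matrix {v : Fin n // v ≠ a} {v : Fin n // v ≠ a} ℝ,
      N.IsSymm ∧
      (∀ i j : {v : Fin n // v ≠ a}, i ≠ j → (N i j ≠ 0 ↔ G.Adj i.val j.val)) ∧
      (Qᵀ * S * Q).charpoly = X * N.charpoly := by
  obtain ⟨hsymm, hadj⟩ := hM
  have hrow : ∀ j, (Qᵀ * S * Q) b j = α * (Qᵀ * S * Q) a j := by
    intro j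
    simp only [Matrix.mul_apply, Matrix.transpose_apply, hcol, Finset.mul_sum, Finset.sum_mul,
      mul_assoc]
  generalize Qᵀ * S * Q = M at *
  have hMsymm : ∀ i j, M i j = M j i := fun i j => hsymm.apply j i
  have hcolM : ∀ i, M i b = α * M i a := fun i => by rw [hMsymm i b, hrow, hMsymm a i]
  obtain ⟨c, hc0, hc⟩ : ∃ c : ℝ, c ≠ 0 ∧ c ^ 2 = 1 + α⁻¹ ^ 2 :=
    ⟨√(1 + α⁻¹ ^ 2), by positivity, Real.sq_sqrt (by positivity)⟩
  let d : Fin n → ℝ := fun i => if i = b then c else 1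
  have hd : ∀ i, d i ≠ 0 := fun i => by
    dsimp only [d]; split_ifs
    exacts [hc0, one_ne_zero]
  let N : Matrix {v : Fin n // v ≠ a} {v : Fin n // v ≠ a} ℝ :=
    Matrix.of fun i j => d i * d j * M i j
  -- Column `j` of `P` is supported at the single row `f j`, with entry `t j`.
  let f : Fin n → {v : Fin n // v ≠ a} := fun j => if h : j = a then ⟨b, hab.symm⟩ else ⟨j, h⟩
  let t : Fin n → ℝ := fun j => if j = a then (c * α)⁻¹ else (d j)⁻¹
  let P : Matrix {v : Fin n // v ≠ a} (Fin n) ℝ := Matrix.of fun v j => if v = f j then t j else 0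
  have hfa : f a = ⟨b, hab.symm⟩ := by simp [f]
  have hfv : ∀ v : {v : Fin n // v ≠ a}, f v = v := fun v => by simp [f, v.2]
  have hPP : P * Pᵀ = 1 := by
    ext v w
    rw [Matrix.mul_apply, Fintype.sum_eq_add_sum_subtype_ne _ a]
    simp only [P, Matrix.of_apply, Matrix.transpose_apply, hfa, hfv]
    by_cases hvw : v = w
    · subst hvw
      by_cases hv : v = ⟨b, hab.symm⟩
      · subst hv
        simp [t, d, hab.symm]
        field_simp
        field_simp at hc
        linarith
      · have hv' : (v : Fin n) ≠ b := fun h => hv (Subtype.ext h)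
        simp [t, d, hv, hv', v.2]
    · have hne : ¬ (v = ⟨b, hab.symm⟩ ∧ w = ⟨b, hab.symm⟩) := fun h => hvw (h.1.trans h.2.symm)
      rw [Matrix.one_apply_ne hvw]
      simp [hvw]
      exact fun h1 h2 => absurd ⟨h2, h1⟩ hne
  have hfac : Pᵀ * N * P = M := by
    ext i j
    have h1 : (Pᵀ * N * P) i j = t i * N (f i) (f j) * t j := by
      simp [Matrix.mul_apply, P]
    rw [h1]
    by_cases hi : i = a <;> by_cases hj : j = a
    · subst hi hj
      simp [N, hfa, t, d, hrow, hcolM]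
      field_simp
    · subst hi
      have := hd j
      have hfj : f j = ⟨j, hj⟩ := hfv ⟨j, hj⟩
      simp only [N, hfa, hfj, Matrix.of_apply, t, if_true, if_neg hj, hrow]
      have hb : d b = c := by simp [d]
      rw [hb]
      field_simp
    · subst hj
      have := hd i
      have hfi : f i = ⟨i, hi⟩ := hfv ⟨i, hi⟩
      simp only [N, hfa, hfi, Matrix.of_apply, t, if_true, if_neg hi, hcolM]
      have hb : d b = c := by simp [d]
      rw [hb]
      field_simp
    · have := hd i
      have := hd j
      have hfi : f i = ⟨i, hi⟩ := hfv ⟨i, hi⟩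
      have hfj : f j = ⟨j, hj⟩ := hfv ⟨j, hj⟩
      simp only [N, hfi, hfj, Matrix.of_apply, t, if_neg hi, if_neg hj]
      field_simp
  refine ⟨N, ?_, ?_, ?_⟩
  · ext i j
    simp only [N, Matrix.transpose_apply, Matrix.of_apply, hMsymm j i]
    ring
  · intro i j hij
    rw [← hadj i j (fun h => hij (Subtype.ext h))]
    simp [N, hd]
  · rw [← hfac]
    refine charpoly_eq_X_mul_of_isometry ?_ N P hPP
    have := a.pos
    simp [Fintype.card_subtype_compl]
    omega
end

section
/- Let S be a 3×3 real symmetric invertible matrix, and let x, y ∈ ℝ³ be vectors satisfying xᵀSx = 0, yᵀSy = 0, and xᵀSy = 0. Then x and y are linearly dependent, i.e., one of them is a scalar multiple of the other. -/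
open Matrix

/-!
Put `w = Sx × Sy`. The triple product expansion `a × (b × c) = (a ⬝ c) b - (a ⬝ b) c` together with
the three isotropy relations gives `x × w = 0 = y × w`. If `w ≠ 0`, both `x` and `y` are multiples
of `w`, hence of one another. If `w = 0`, then `Sx` and `Sy` are dependent, and so are `x` and `y`
because `S` is injective.
-/

/-- A vector whose cross product with a nonzero vector vanishes is a multiple of it. -/
lemma exists_smul_of_cross_eq_zero {u v : Fin 3 → ℝ} (hv : v ≠ 0)
    (h : crossProduct u v = 0) : ∃ c : ℝ, u = c • v := by
  obtain ⟨i, hi⟩ := Function.ne_iff.mp hv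
  refine ⟨u i / v i, ?_⟩
  have h0 := congrFun h 0
  have h1 := congrFun h 1
  have h2 := congrFun h 2
  simp [cross_apply] at h0 h1 h2
  ext j
  simp only [Pi.zero_apply] at hi
  simp only [Pi.smul_apply, smul_eq_mul]
  rw [div_mul_eq_mul_div, eq_div_iff hi]
  fin_cases i <;> fin_cases j <;> simp <;> linarith

theorem isotropic_orthogonal_dependent (S : Matrix (Fin 3) (Fin 3) ℝ)
    (hS : S.IsSymm) (hdet : IsUnit S.det)
    (x y : Fin 3 → ℝ)
    (hx : x ⬝ᵥ S.mulVec x = 0) (hy : y ⬝ᵥ S.mulVec y = 0)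
    (hxy : x ⬝ᵥ S.mulVec y = 0) :
    (∃ c : ℝ, y = c • x) ∨ (∃ c : ℝ, x = c • y) := by
  have hinj : Function.Injective S.mulVec :=
    Matrix.mulVec_injective_iff_isUnit.mpr ((Matrix.isUnit_iff_isUnit_det S).mpr hdet)
  have hyx : y ⬝ᵥ S.mulVec x = 0 := by
    rw [dotProduct_mulVec, ← mulVec_transpose, hS.eq, dotProduct_comm, hxy]
  have triple : ∀ a b c : Fin 3 → ℝ, a ⬝ᵥ b = 0 → a ⬝ᵥ c = 0 →
      crossProduct a (crossProduct b c) = 0 := by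
    intro a b c hb hc
    rw [cross_cross_eq_smul_sub_smul', hc, dotProduct_comm b a, hb]
    simp
  by_cases hw : crossProduct (S.mulVec x) (S.mulVec y) = 0
  · by_cases hSy : S.mulVec y = 0
    · left
      exact ⟨0, hinj (by simp [hSy])⟩
    · right
      obtain ⟨c, hc⟩ := exists_smul_of_cross_eq_zero hSy hw
      exact ⟨c, hinj (by simp only [hc, mulVec_smul])⟩
  · obtain ⟨c, hc⟩ := exists_smul_of_cross_eq_zero hw (triple x _ _ hx hxy)
    obtain ⟨d, hd⟩ := exists_smul_of_cross_eq_zero hw (triple y _ _ hyx hy)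
    generalize crossProduct (S.mulVec x) (S.mulVec y) = w at hc hd
    by_cases h0 : c = 0
    · right
      exact ⟨0, by simp [hc, h0]⟩
    · left
      exact ⟨d / c, by rw [hc, hd, smul_smul, div_mul_cancel₀ _ h0]⟩
end

section
/- For all real numbers λ_1 < λ_2 < λ_3, there exists a matrix M ∈ S(G96) whose characteristic polynomial equals (X − λ_1)^2 (X − λ_2)^2 (X − λ_3)^2. That is, G96 attains the ordered multiplicity list (2,2,2) with arbitrary spectrum. -/
/-!
Let vertex 4 be the centre; deleting it leaves the path 2-1-3 and the isolated vertices 5 and 6.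
Put `p = l₁ - l₂ < 0` and `q = l₃ - l₂ > 0`, and let `b` be the vector of entries joining vertex 4
to the other vertices. Give the two pendant vertices the diagonal entry `l₂`, and choose the path
block with spectrum `l₁, l₂, l₃` so that `b` restricted to the path is an eigenvector for `l₂`.
The matrix with row and column 4 deleted then has characteristic polynomial
`(X - l₁)(X - l₂)³(X - l₃)`, and `b` lies entirely in its `l₂`-eigenspace. By the Schur complement,
the full characteristic polynomial is this product times `X - a - ‖b‖² / (X - l₂)`, where `a` is the
diagonal entry at vertex 4. Taking `a = l₂ + p + q` and `‖b‖² = -pq` makes the last factor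
`(X - l₁)(X - l₃) / (X - l₂)`, which yields the multiplicities `(2, 2, 2)`.

The path block has diagonal `l₂ + p + q` at vertex 1 and `l₂` at vertices 2 and 3, and its
off-diagonal entries have squares summing to `-pq`. Writing `p = -15 g²`, `q = 15 h²` turns every
condition into an identity over `ℤ[g, h, l₂]`: with `r = g h`, the path entries `9r, -12r` and the
vector `b = (4r, 3r, 10r, 10r)` satisfy `9² + 12² = 4² + 3² + 10² + 10² = 15²` and
`9 * 4 - 12 * 3 = 0`.
-/

open Polynomial Matrix

/-- The graph `G96` on vertices 1..6 (encoded as `Fin 6`, vertex `v` is `v.val + 1`). -/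
def G96 : SimpleGraph (Fin 6) :=
  SimpleGraph.fromRel (fun i j =>
    ((i : ℕ) + 1, (j : ℕ) + 1) ∈ [(1, 2), (1, 3), (2, 4), (3, 4), (4, 5), (4, 6)])

/-- The realizing matrix for the spectrum `y - 15 g², y, y + 15 h²`, each eigenvalue doubled. -/
noncomputable def realizer (y g h : ℝ) : Matrix (Fin 6) (Fin 6) ℝ :=
  !![y - 15 * g ^ 2 + 15 * h ^ 2, 9 * (g * h), -12 * (g * h), 0, 0, 0;
     9 * (g * h), y, 0, 4 * (g * h), 0, 0;
     -12 * (g * h), 0, y, 3 * (g * h), 0, 0;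
     0, 4 * (g * h), 3 * (g * h), y - 15 * g ^ 2 + 15 * h ^ 2, 10 * (g * h), 10 * (g * h);
     0, 0, 0, 10 * (g * h), y, 0;
     0, 0, 0, 10 * (g * h), 0, y]

theorem realizer_inS (y : ℝ) {g h : ℝ} (hg : g ≠ 0) (hh : h ≠ 0) : inS G96 (realizer y g h) := by
  refine ⟨?_, ?_⟩
  · ext i j
    fin_cases i <;> fin_cases j <;> simp [realizer, Matrix.transpose_apply]
  · intro i j hij
    fin_cases i <;> fin_cases j <;> simp [realizer, G96, hg, hh] at hij ⊢

theorem realizer_charpoly (y g h : ℝ) :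
    (realizer y g h).charpoly =
      (X - C (y - 15 * g ^ 2)) ^ 2 * (X - C y) ^ 2 * (X - C (y + 15 * h ^ 2)) ^ 2 := by
  have e : (realizer y g h).charmatrix =
      !![X - C (y - 15 * g ^ 2 + 15 * h ^ 2), -C (9 * (g * h)), -C (-12 * (g * h)), 0, 0, 0;
         -C (9 * (g * h)), X - C y, 0, -C (4 * (g * h)), 0, 0;
         -C (-12 * (g * h)), 0, X - C y, -C (3 * (g * h)), 0, 0;
         0, -C (4 * (g * h)), -C (3 * (g * h)), X - C (y - 15 * g ^ 2 + 15 * h ^ 2),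
           -C (10 * (g * h)), -C (10 * (g * h));
         0, 0, 0, -C (10 * (g * h)), X - C y, 0;
         0, 0, 0, -C (10 * (g * h)), 0, X - C y] := by
    ext1 i j
    fin_cases i <;> fin_cases j <;> simp [realizer]
  rw [Matrix.charpoly, e]
  simp only [map_add, map_sub, map_mul, map_pow, map_neg, map_ofNat]
  generalize (C y : ℝ[X]) = Y
  generalize (C g : ℝ[X]) = G
  generalize (C h : ℝ[X]) = H
  simp [Matrix.det_succ_row_zero, Fin.sum_univ_succ, Fin.succAbove]
  ring

theorem G96_attains_222_spectrally_arbitrary (l₁ l₂ l₃ : ℝ) (h₁₂ : l₁ < l₂) (h₂₃ : l₂ < l₃) :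
    ∃ M : Matrix (Fin 6) (Fin 6) ℝ, inS G96 M ∧
      M.charpoly = (X - C l₁) ^ 2 * (X - C l₂) ^ 2 * (X - C l₃) ^ 2 := by
  have hp : 0 < (l₂ - l₁) / 15 := by linarith
  have hq : 0 < (l₃ - l₂) / 15 := by linarith
  refine ⟨realizer l₂ √((l₂ - l₁) / 15) √((l₃ - l₂) / 15),
    realizer_inS _ (Real.sqrt_pos.2 hp).ne' (Real.sqrt_pos.2 hq).ne', ?_⟩
  rw [realizer_charpoly, Real.sq_sqrt hp.le, Real.sq_sqrt hq.le]
  congr 4 <;> ring_nf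
end

section
/- For all real numbers λ_1 < λ_2 < λ_3, there exists a matrix M ∈ S(C_6) whose characteristic polynomial equals (X − λ_1)^2 (X − λ_2)^2 (X − λ_3)^2, where C_6 is the 6-cycle. That is, the cycle C_6 attains the ordered multiplicity list (2,2,2) with arbitrary spectrum. -/
/-!
The idea is to take a `6 × 6` periodic Jacobi matrix whose entries repeat with period `3`, except
that one of the two copies of the third off-diagonal entry has its sign flipped. If the diagonal
entries are `b₁, b₂, b₃` and the off-diagonal ones `a₁, a₂, a₃`, its characteristic polynomial is
the *square* of the discriminant
`Δ(x) = (x - b₁)(x - b₂)(x - b₃) - a₁²(x - b₃) - a₂²(x - b₁) - a₃²(x - b₂)`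
(`charpoly_twistedCycle`). It remains to choose the parameters, with all `aᵢ ≠ 0`, so that
`Δ(x) = (x - l₁)(x - l₂)(x - l₃)`.

Take `b = (l₁ + d, l₂, l₃ - d)` with `0 < d < min (l₂ - l₁) (l₃ - l₂)`. Then
`(x - b₁)(x - b₂)(x - b₃) - (x - l₁)(x - l₂)(x - l₃) = s (x - l₂)` with `s = d (l₃ - l₁ - d) > 0`,
so `a₂², a₃², a₁²` must be positive weights of total mass `s` on the points `b₁, b₂, b₃`
respectively, with barycentre `l₂`.
They exist because `b₁ < b₂ = l₂ < b₃` (`exists_parameters`).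
-/

open Polynomial Matrix

/-- The graph `C6` on vertices 1..6 (encoded as `Fin 6`, vertex `v` is `v.val + 1`). -/
def C6 : SimpleGraph (Fin 6) :=
  SimpleGraph.fromRel (fun i j =>
    ((i : ℕ) + 1, (j : ℕ) + 1) ∈ [(1, 2), (2, 3), (3, 4), (4, 5), (5, 6), (1, 6)])

/-- The `3`-periodic Jacobi matrix of size `6` with antiperiodic boundary condition: the two corner
entries are `-a₃` instead of `a₃`. -/
def twistedCycle (a₁ a₂ a₃ b₁ b₂ b₃ : ℝ) : Matrix (Fin 6) (Fin 6) ℝ :=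
  !![b₁, a₁, 0, 0, 0, -a₃;
     a₁, b₂, a₂, 0, 0, 0;
     0, a₂, b₃, a₃, 0, 0;
     0, 0, a₃, b₁, a₁, 0;
     0, 0, 0, a₁, b₂, a₂;
     -a₃, 0, 0, 0, a₂, b₃]

theorem twistedCycle_inS {a₁ a₂ a₃ : ℝ} (b₁ b₂ b₃ : ℝ) (h₁ : a₁ ≠ 0) (h₂ : a₂ ≠ 0)
    (h₃ : a₃ ≠ 0) : inS C6 (twistedCycle a₁ a₂ a₃ b₁ b₂ b₃) := by
  refine ⟨?_, ?_⟩
  · ext i j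
    fin_cases i <;> fin_cases j <;> rfl
  · intro i j hij
    fin_cases i <;> fin_cases j <;> simp_all [twistedCycle, C6]

theorem charpoly_twistedCycle (a₁ a₂ a₃ b₁ b₂ b₃ : ℝ) :
    (twistedCycle a₁ a₂ a₃ b₁ b₂ b₃).charpoly =
      ((X - C b₁) * (X - C b₂) * (X - C b₃) - C (a₁ ^ 2) * (X - C b₃) - C (a₂ ^ 2) * (X - C b₁)
        - C (a₃ ^ 2) * (X - C b₂)) ^ 2 := by
  refine Polynomial.funext fun x => ?_
  have h : Matrix.scalar (Fin 6) x - twistedCycle a₁ a₂ a₃ b₁ b₂ b₃ =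
      !![x - b₁, -a₁, 0, 0, 0, a₃;
         -a₁, x - b₂, -a₂, 0, 0, 0;
         0, -a₂, x - b₃, -a₃, 0, 0;
         0, 0, -a₃, x - b₁, -a₁, 0;
         0, 0, 0, -a₁, x - b₂, -a₂;
         a₃, 0, 0, 0, -a₂, x - b₃] := by
    ext i j
    fin_cases i <;> fin_cases j <;> simp [twistedCycle]
  rw [Matrix.eval_charpoly, h]
  simp [Matrix.det_succ_row_zero, Fin.sum_univ_succ, Fin.succAbove]
  ring

theorem exists_parameters {l₁ l₂ l₃ : ℝ} (h₁₂ : l₁ < l₂) (h₂₃ : l₂ < l₃) :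
    ∃ a₁ a₂ a₃ b₁ b₂ b₃ : ℝ, a₁ ≠ 0 ∧ a₂ ≠ 0 ∧ a₃ ≠ 0 ∧ ∀ x : ℝ,
      (x - b₁) * (x - b₂) * (x - b₃) - a₁ ^ 2 * (x - b₃) - a₂ ^ 2 * (x - b₁) - a₃ ^ 2 * (x - b₂) =
        (x - l₁) * (x - l₂) * (x - l₃) := by
  obtain ⟨d, hd, hd'⟩ := exists_between (lt_min (sub_pos.2 h₁₂) (sub_pos.2 h₂₃))
  obtain ⟨hd₁, hd₃⟩ := lt_min_iff.1 hd'
  have hs : 0 < d * (l₃ - l₁ - d) := mul_pos hd (by linarith)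
  have hw : 0 < (l₃ - d) - (l₁ + d) := by linarith
  have hw₁ : 0 < l₂ - (l₁ + d) := by linarith
  have hw₃ : 0 < (l₃ - d) - l₂ := by linarith
  -- Half of the mass sits at `l₂`; the other half is split between `b₁` and `b₃` by the lever rule.
  have p₁ : 0 < d * (l₃ - l₁ - d) / 2 * (l₂ - (l₁ + d)) / ((l₃ - d) - (l₁ + d)) := by positivity
  have p₂ : 0 < d * (l₃ - l₁ - d) / 2 * ((l₃ - d) - l₂) / ((l₃ - d) - (l₁ + d)) := by positivity
  have p₃ : 0 < d * (l₃ - l₁ - d) / 2 := by positivity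
  refine ⟨√_, √_, √_, l₁ + d, l₂, l₃ - d, (Real.sqrt_pos.2 p₁).ne', (Real.sqrt_pos.2 p₂).ne',
    (Real.sqrt_pos.2 p₃).ne', fun x => ?_⟩
  rw [Real.sq_sqrt p₁.le, Real.sq_sqrt p₂.le, Real.sq_sqrt p₃.le]
  have hw' := hw.ne'
  field_simp
  ring

theorem C6_attains_222_spectrally_arbitrary (l₁ l₂ l₃ : ℝ) (h₁₂ : l₁ < l₂) (h₂₃ : l₂ < l₃) :
    ∃ M : Matrix (Fin 6) (Fin 6) ℝ, inS C6 M ∧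
      M.charpoly = (X - C l₁) ^ 2 * (X - C l₂) ^ 2 * (X - C l₃) ^ 2 := by
  obtain ⟨a₁, a₂, a₃, b₁, b₂, b₃, h₁, h₂, h₃, h⟩ := exists_parameters h₁₂ h₂₃
  refine ⟨twistedCycle a₁ a₂ a₃ b₁ b₂ b₃, twistedCycle_inS b₁ b₂ b₃ h₁ h₂ h₃, ?_⟩
  rw [charpoly_twistedCycle, ← mul_pow, ← mul_pow]
  congr 1
  refine Polynomial.funext fun x => ?_
  simpa using h x
end

section
/- For all real numbers λ_1 < λ_2 < λ_3, there exists a matrix M ∈ S(G189) whose characteristic polynomial equals (X − λ_1) (X − λ_2)^4 (X − λ_3). That is, G189 attains the ordered multiplicity list (1,4,1) with arbitrary spectrum. -/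
/-!
The matrix has the form `M = l₂ • 1 + N` with `N = x yᵀ + y xᵀ` of rank two. The nonzero part of the
spectrum of `N` is that of a `2 × 2` matrix with trace `2 x·y` and determinant `(x·y)² - |x|²|y|²`
(`charpoly_rankTwo`), so its nonzero eigenvalues are `x·y ± |x||y|`, to be matched with `l₃ - l₂` and
`l₁ - l₂`.

The entry `x i * y j + y i * x j` is the Lorentzian product, in null coordinates, of the vectors
`(x i, y i)` of a plane. Taking `x = (s, s, s, t p, t p, -t q)` and `y = (0, 0, 0, p, p, q)` puts the
vertices 1, 2, 3 on one null line, 4 and 5 on a common line that is not null, and 6 on the line orthogonal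
to it, which yields precisely the pattern of `G189`. Normalising `|y| = 1` leaves
`x·y = t (1 - 2 q²) = D` and `|x|² = 3 s² + t² = T²`, where `D = (l₁ + l₃ - 2 l₂) / 2` and
`T = (l₃ - l₁) / 2`; since `|D| < T`, this is solvable with all of `s, t, p, q` positive
(`exists_params`).
-/

open Polynomial Matrix

/-- The graph `G189` on vertices 1..6 (encoded as `Fin 6`, vertex `v` is `v.val + 1`). -/
def G189 : SimpleGraph (Fin 6) :=
  SimpleGraph.fromRel (fun i j =>
    ((i : ℕ) + 1, (j : ℕ) + 1) ∈ [(1, 4), (1, 5), (1, 6), (2, 4), (2, 5), (2, 6), (3, 4), (3, 5), (3, 6), (4, 5)])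

/-- Writing `x yᵀ + y xᵀ = A B` with `A = [x y]` and `B = [y x]ᵀ` reduces its characteristic
polynomial to that of the `2 × 2` matrix `B A` of dot products, up to a factor `X ^ 4`; adding `c • 1`
then substitutes `X - c` for `X`. -/
lemma charpoly_rankTwo (c : ℝ) (x y : Fin 6 → ℝ) :
    (scalar (Fin 6) c + of fun i j => x i * y j + y i * x j).charpoly =
      (X - C c) ^ 4 * ((X - C c) ^ 2 - C (2 * (x ⬝ᵥ y)) * (X - C c)
        + C ((x ⬝ᵥ y) ^ 2 - (x ⬝ᵥ x) * (y ⬝ᵥ y))) := by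
  set A : Matrix (Fin 6) (Fin 2) ℝ := of fun i => ![x i, y i] with hA
  set B : Matrix (Fin 2) (Fin 6) ℝ := of ![y, x] with hB
  have hAB : (of fun i j => x i * y j + y i * x j : Matrix (Fin 6) (Fin 6) ℝ) = A * B := by
    ext i j
    simp [hA, hB, mul_apply, Fin.sum_univ_two]
  have hBA : (B * A).charpoly = X ^ 2 - C (2 * (x ⬝ᵥ y)) * X
      + C ((x ⬝ᵥ y) ^ 2 - (x ⬝ᵥ x) * (y ⬝ᵥ y)) := by
    have h00 : (B * A) 0 0 = x ⬝ᵥ y := by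
      simp [hA, hB, mul_apply, dotProduct, mul_comm]
    have h01 : (B * A) 0 1 = y ⬝ᵥ y := by
      simp [hA, hB, mul_apply, dotProduct]
    have h10 : (B * A) 1 0 = x ⬝ᵥ x := by
      simp [hA, hB, mul_apply, dotProduct]
    have h11 : (B * A) 1 1 = x ⬝ᵥ y := by
      simp [hA, hB, mul_apply, dotProduct]
    rw [charpoly_fin_two, trace_fin_two, det_fin_two, h00, h01, h10, h11]
    congr 2 <;> ring_nf
  have hN : (A * B).charpoly = X ^ 4 * (B * A).charpoly := by
    have h := charpoly_mul_comm' A B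
    simp only [Fintype.card_fin] at h
    apply mul_left_cancel₀ (pow_ne_zero 2 (X_ne_zero (R := ℝ)))
    rw [h]
    ring
  have hshift : (scalar (Fin 6) c + A * B).charpoly = (A * B).charpoly.comp (X - C c) := by
    have h := charpoly_sub_scalar (A * B) (-c)
    rw [map_neg, sub_neg_eq_add, add_comm, map_neg, ← sub_eq_add_neg] at h
    exact h
  rw [hAB, hshift, hN, hBA]
  simp

lemma exists_params (T D : ℝ) (h : |D| < T) :
    ∃ s t p q : ℝ, 0 < s ∧ 0 < t ∧ 0 < p ∧ 0 < q ∧ 2 * p ^ 2 + q ^ 2 = 1 ∧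
      t * (1 - 2 * q ^ 2) = D ∧ 3 * s ^ 2 + t ^ 2 = T ^ 2 := by
  -- any `t` strictly between `|D|` and `T` works; the midpoint is positive even when `D = 0`
  obtain ⟨t, ht₁, ht₂⟩ := exists_between h
  have h0 := abs_nonneg D
  have ht : 0 < t := by linarith
  obtain ⟨hD₁, hD₂⟩ := abs_lt.mp ht₁
  have hr₁ : D / t < 1 := (div_lt_one ht).mpr hD₂
  have hr₂ : -1 < D / t := by rw [lt_div_iff₀ ht]; linarith
  have hs : 0 < (T ^ 2 - t ^ 2) / 3 := by nlinarith
  have hp : 0 < (1 + D / t) / 4 := by linarith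
  have hq : 0 < (1 - D / t) / 2 := by linarith
  refine ⟨√((T ^ 2 - t ^ 2) / 3), t, √((1 + D / t) / 4), √((1 - D / t) / 2),
    Real.sqrt_pos.mpr hs, ht, Real.sqrt_pos.mpr hp, Real.sqrt_pos.mpr hq, ?_, ?_, ?_⟩
  · rw [Real.sq_sqrt hp.le, Real.sq_sqrt hq.le]; ring
  · rw [Real.sq_sqrt hq.le]; field_simp; ring
  · rw [Real.sq_sqrt hs.le]; ring

theorem G189_attains_141_spectrally_arbitrary (l₁ l₂ l₃ : ℝ)
    (h₁₂ : l₁ < l₂) (h₂₃ : l₂ < l₃) :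
    ∃ M : Matrix (Fin 6) (Fin 6) ℝ, inS G189 M ∧
      M.charpoly = (X - C l₁) * (X - C l₂) ^ 4 * (X - C l₃) := by
  obtain ⟨s, t, p, q, hs, ht, hp, hq, hy, hxy, hx⟩ :=
    exists_params ((l₃ - l₁) / 2) ((l₁ + l₃ - 2 * l₂) / 2)
      (abs_lt.mpr ⟨by linarith, by linarith⟩)
  set x : Fin 6 → ℝ := ![s, s, s, t * p, t * p, -(t * q)] with hxdef
  set y : Fin 6 → ℝ := ![0, 0, 0, p, p, q] with hydef
  refine ⟨scalar (Fin 6) l₂ + of fun i j => x i * y j + y i * x j, ⟨?_, ?_⟩, ?_⟩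
  · ext i j
    rcases eq_or_ne i j with rfl | hij
    · rfl
    · simp [hij, hij.symm]
      ring
  · have h45 : t * p * p + p * (t * p) ≠ 0 := by positivity
    intro i j hij
    fin_cases i <;> fin_cases j <;>
      simp [G189, hxdef, hydef, hs.ne', hp.ne', hq.ne', h45] at hij ⊢
    -- what remains is the orthogonality of vertex 6 to vertices 4 and 5
    all_goals ring
  · have e₁ : x ⬝ᵥ y = (l₁ + l₃ - 2 * l₂) / 2 := by
      simp [hxdef, hydef, dotProduct, Fin.sum_univ_succ]
      linear_combination hxy + t * hy
    have e₂ : y ⬝ᵥ y = 1 := by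
      simp [hydef, dotProduct, Fin.sum_univ_succ]
      linear_combination hy
    have e₃ : x ⬝ᵥ x = ((l₃ - l₁) / 2) ^ 2 := by
      simp [hxdef, dotProduct, Fin.sum_univ_succ]
      linear_combination hx + t ^ 2 * hy
    rw [charpoly_rankTwo, e₁, e₂, e₃]
    -- with `a = l₃ - l₂` and `b = l₁ - l₂` the quadratic factor is `Z² - (a + b) Z + a b` at `Z = X - l₂`
    have c₁ : 2 * ((l₁ + l₃ - 2 * l₂) / 2) = l₁ + l₃ - 2 * l₂ := by ring
    have c₂ : ((l₁ + l₃ - 2 * l₂) / 2) ^ 2 - ((l₃ - l₁) / 2) ^ 2 * 1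
        = (l₃ - l₂) * (l₁ - l₂) := by ring
    rw [c₁, c₂]
    simp only [map_sub, map_add, map_mul, map_ofNat]
    ring
end

section
/- For all real numbers λ_1 < λ_2 < λ_3, there exist matrices M, M' ∈ S(G151) whose characteristic polynomials equal (X − λ_1)^3 (X − λ_2) (X − λ_3)^2 and (X − λ_1)^2 (X − λ_2) (X − λ_3)^3 respectively; and for all real numbers λ_1 < λ_2 < λ_3 < λ_4, there exist matrices N, N' ∈ S(G151) whose characteristic polynomials equal (X − λ_1)^3 (X − λ_2) (X − λ_3) (X − λ_4) and (X − λ_1) (X − λ_2) (X − λ_3) (X − λ_4)^3 respectively. That is, G151 attains each of the ordered multiplicity lists (3,1,2), (2,1,3), (3,1,1,1), and (1,1,1,3) with arbitrary spectrum. -/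
/-!
The characteristic polynomials are all of the form `(X - l)³ (X - a) (X - b) (X - c)` up to the
substitution `M ↦ -M`, so it suffices to find, for `0 < a < b ≤ c`, a positive semidefinite
`M ∈ S(G151)` of rank three with nonzero eigenvalues `a, b, c`, and to translate by a scalar.

Write `M = Vᵀ V` with `V` of size `3 × 6`, so that the nonzero eigenvalues of `M` are those of
`V Vᵀ`. The columns of `V` must be orthogonal exactly at the non-edges of `G151`. Since `1, 3, 6`
are pairwise nonadjacent, the columns there may be taken along the coordinate axes; the remaining
orthogonality relations then give the family `gramFactor` below. Its axis-parallel columns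
contribute arbitrary positive amounts to the diagonal of `V Vᵀ`, so a symmetric matrix
`B` is of the form `V Vᵀ` as soon as its off-diagonal entries are matched by the other three columns
and these columns contribute less than `B` on the diagonal.

For `B` take `c I - (c - a) u uᵀ - (c - b) w wᵀ`, where `u, w` are the unit vectors along
`(1, e, e)` and `(-e, 1, 0)`. Its eigenvalues are `a, b, c`. The off-diagonal entries can be matched
explicitly, and as `e → 0` the diagonal conditions become `4 t² < a`, `0 < b` and `t² < c`,
where `t² = (1 - p²) (b - a) / (3 p²)` is small once the free parameter `p < 1` is close to `1`.
Thus the conditions hold for small `e > 0` (`exists_params`).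
-/

open Polynomial Matrix

/-- The graph `G151` on vertices 1..6 (encoded as `Fin 6`, vertex `v` is `v.val + 1`). -/
def G151 : SimpleGraph (Fin 6) :=
  SimpleGraph.fromRel (fun i j =>
    ((i : ℕ) + 1, (j : ℕ) + 1) ∈ [(1, 2), (1, 5), (2, 3), (2, 6), (3, 4), (4, 5), (4, 6), (5, 6)])

/-- A choice of parameters for which `gramFactor` can have prescribed `V Vᵀ`. Here
`D = (c - a) / (1 + 2 e²)` and `W = (c - b) / (1 + e²)` are the coefficients of `c I - B` with
respect to the non-normalized vectors `(1, e, e)` and `(-e, 1, 0)`. The last three inequalities say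
that columns 2, 4 and 5 of `gramFactor`, with `z = e D / q`, `t = q / (3 p)` and
`y = -e q / (2 (1 - p²))`, contribute less than `B` on each diagonal position. -/
theorem exists_params_s17 {a b c : ℝ} (ha : 0 < a) (hab : a < b) (hbc : b ≤ c) :
    ∃ p e D W q : ℝ, 0 < p ∧ p < 1 ∧ 0 < e ∧ D = (c - a) / (1 + 2 * e ^ 2) ∧
      W = (c - b) / (1 + e ^ 2) ∧ 0 < D ∧ 0 < q ∧ q ^ 2 = 3 * (1 - p ^ 2) * (D - W) ∧
      (p * (e * D / q)) ^ 2 + 4 * (q / (3 * p)) ^ 2 < c - D - W * e ^ 2 ∧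
      (2 * (e * D / q)) ^ 2 + (p * (-(e * q) / (2 * (1 - p ^ 2)))) ^ 2 < c - D * e ^ 2 - W ∧
      (-(e * q) / (2 * (1 - p ^ 2))) ^ 2 + (q / (3 * p)) ^ 2 + (2 * p * (e * D / q)) ^ 2
        < c - D * e ^ 2 := by
  obtain ⟨p, hp0, hp1, hp⟩ : ∃ p : ℝ, 0 < p ∧ p < 1 ∧ 4 * (1 - p ^ 2) * (b - a) < 3 * a * p ^ 2 := by
    have h : ∀ᶠ p : ℝ in nhdsWithin 1 (Set.Iio 1),
        4 * (1 - p ^ 2) * (b - a) < 3 * a * p ^ 2 :=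
      nhdsWithin_le_nhds <| ContinuousAt.eventually_lt (by fun_prop) (by fun_prop)
        (by norm_num; exact ha)
    have h0 : ∀ᶠ p : ℝ in nhdsWithin 1 (Set.Iio 1), 0 < p :=
      nhdsWithin_le_nhds (lt_mem_nhds one_pos)
    obtain ⟨p, h1, h2, h3⟩ := (h.and (h0.and self_mem_nhdsWithin)).exists
    exact ⟨p, h2, h3, h1⟩
  have hp2 : 0 < 1 - p ^ 2 := by nlinarith
  -- `D`, `W` and `q` are continuous at `e = 0`, so it is enough to check the strict inequalities there.
  set D : ℝ → ℝ := fun e => (c - a) / (1 + 2 * e ^ 2) with hD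
  set W : ℝ → ℝ := fun e => (c - b) / (1 + e ^ 2) with hW
  set q : ℝ → ℝ := fun e => √(3 * (1 - p ^ 2) * (D e - W e)) with hq
  have hD0 : D 0 = c - a := by simp [D]
  have hW0 : W 0 = c - b := by simp [W]
  have hDc : ContinuousAt D 0 := by
    refine ContinuousAt.div (by fun_prop) (by fun_prop) (by norm_num)
  have hWc : ContinuousAt W 0 := by
    refine ContinuousAt.div (by fun_prop) (by fun_prop) (by norm_num)
  have hqc : ContinuousAt q 0 := by fun_prop
  have hq0 : q 0 ^ 2 = 3 * (1 - p ^ 2) * (b - a) := by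
    simp only [q, hD0, hW0]
    rw [Real.sq_sqrt]
    · ring
    · have : 0 < b - a := by linarith
      rw [show c - a - (c - b) = b - a by ring]; positivity
  have hq0p : q 0 ≠ 0 := by
    intro h
    rw [h] at hq0
    have : 0 < b - a := by linarith
    have : 0 < 3 * (1 - p ^ 2) * (b - a) := by positivity
    linarith [zero_pow (M₀ := ℝ) two_ne_zero]
  -- The only condition at `e = 0` that is not automatic; it is what forces `p` to be close to `1`.
  have ht : 4 * (q 0 / (3 * p)) ^ 2 < a := by
    rw [div_pow, hq0, ← mul_div_assoc, div_lt_iff₀ (by positivity)]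
    nlinarith
  have hzc : ContinuousAt (fun e => e * D e / q e) 0 :=
    ContinuousAt.div (by fun_prop) hqc hq0p
  have hyc : ContinuousAt (fun e => -(e * q e) / (2 * (1 - p ^ 2))) 0 := by fun_prop
  have htc : ContinuousAt (fun e => q e / (3 * p)) 0 := by fun_prop
  have e1 : ∀ᶠ e in nhds (0 : ℝ), 0 < D e - W e := by
    refine ContinuousAt.eventually_lt (f := fun _ => 0) (g := fun e => D e - W e)
      (by fun_prop) (by fun_prop) ?_
    simp only [hD0, hW0]; linarith
  have e2 : ∀ᶠ e in nhds (0 : ℝ), (p * (e * D e / q e)) ^ 2 + 4 * (q e / (3 * p)) ^ 2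
      < c - D e - W e * e ^ 2 := by
    refine ContinuousAt.eventually_lt
      (f := fun e => (p * (e * D e / q e)) ^ 2 + 4 * (q e / (3 * p)) ^ 2)
      (g := fun e => c - D e - W e * e ^ 2) (by fun_prop) (by fun_prop) ?_
    simp only [hD0]; norm_num; linarith
  have e3 : ∀ᶠ e in nhds (0 : ℝ), (2 * (e * D e / q e)) ^ 2 +
      (p * (-(e * q e) / (2 * (1 - p ^ 2)))) ^ 2 < c - D e * e ^ 2 - W e := by
    refine ContinuousAt.eventually_lt
      (f := fun e => (2 * (e * D e / q e)) ^ 2 + (p * (-(e * q e) / (2 * (1 - p ^ 2)))) ^ 2)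
      (g := fun e => c - D e * e ^ 2 - W e) (by fun_prop) (by fun_prop) ?_
    simp only [hW0]; norm_num; linarith
  have e4 : ∀ᶠ e in nhds (0 : ℝ), (-(e * q e) / (2 * (1 - p ^ 2))) ^ 2 + (q e / (3 * p)) ^ 2 +
      (2 * p * (e * D e / q e)) ^ 2 < c - D e * e ^ 2 := by
    refine ContinuousAt.eventually_lt
      (f := fun e => (-(e * q e) / (2 * (1 - p ^ 2))) ^ 2 + (q e / (3 * p)) ^ 2 +
        (2 * p * (e * D e / q e)) ^ 2)
      (g := fun e => c - D e * e ^ 2) (by fun_prop) (by fun_prop) ?_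
    norm_num; nlinarith [sq_nonneg (q 0 / (3 * p))]
  obtain ⟨e, ⟨h1, h2, h3, h4⟩, he⟩ := ((((e1.and (e2.and (e3.and e4))).filter_mono
    nhdsWithin_le_nhds).and (self_mem_nhdsWithin (a := (0 : ℝ)) (s := Set.Ioi 0)))).exists
  have hG : 0 < 3 * (1 - p ^ 2) * (D e - W e) := by positivity
  refine ⟨p, e, D e, W e, q e, hp0, hp1, he, rfl, rfl, ?_, Real.sqrt_pos.2 hG,
    Real.sq_sqrt hG.le, h2, h3, h4⟩
  have : 0 < c - a := by linarith
  simp only [D]; positivity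

/-- Columns `v₁, …, v₆` in `ℝ³` whose orthogonality relations are exactly the non-edges of `G151`
when all parameters are nonzero. -/
def gramFactor (f g h p z y t : ℝ) : Matrix (Fin 3) (Fin 6) ℝ :=
  !![f, 2 * t, 0, 0, p * z, 0;
     0, p * y, g, 2 * z, 0, 0;
     0, -(2 * p * z), 0, y, t, h]

theorem inS_gramFactor {f g h p z y t : ℝ} (hf : f ≠ 0) (hg : g ≠ 0) (hh : h ≠ 0) (hp : p ≠ 0)
    (hz : z ≠ 0) (hy : y ≠ 0) (ht : t ≠ 0) :
    inS G151 ((gramFactor f g h p z y t)ᵀ * gramFactor f g h p z y t) := by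
  refine ⟨by simp [Matrix.IsSymm, Matrix.transpose_mul], fun i j hij => ?_⟩
  -- The two non-edges `24` and `25` are the only inner products that vanish by cancellation.
  have h24 : p * y * (2 * z) + -(2 * p * z * y) = 0 := by ring
  have h42 : 2 * z * (p * y) + -(y * (2 * p * z)) = 0 := by ring
  have h25 : 2 * t * (p * z) + -(2 * p * z * t) = 0 := by ring
  have h52 : p * z * (2 * t) + -(t * (2 * p * z)) = 0 := by ring
  fin_cases i <;> fin_cases j <;>
    simp [G151, gramFactor, Matrix.mul_apply, Fin.sum_univ_succ, hf, hg, hh, hp, hz, hy, ht,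
      h24, h42, h25, h52] at hij ⊢

theorem eval_charpoly_eq_det {n : Type*} [Fintype n] [DecidableEq n] (M : Matrix n n ℝ) (x : ℝ) :
    M.charpoly.eval x = (scalar n x - M).det :=
  M.eval_charpoly x

theorem charpoly_neg_fin_six (M : Matrix (Fin 6) (Fin 6) ℝ) :
    (-M).charpoly = M.charpoly.comp (-X) := by
  refine Polynomial.funext fun x => ?_
  rw [eval_comp, eval_charpoly_eq_det, eval_charpoly_eq_det]
  have : scalar (Fin 6) x - -M = -(scalar (Fin 6) (eval x (-X)) - M) := by
    simp only [eval_neg, eval_X, map_neg]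
    abel
  rw [this, Matrix.det_neg, Fintype.card_fin, Even.neg_one_pow (by decide), one_mul]

theorem exists_inS_charpoly_of_pos {a b c : ℝ} (ha : 0 < a) (hab : a < b) (hbc : b ≤ c) :
    ∃ M : Matrix (Fin 6) (Fin 6) ℝ, inS G151 M ∧
      M.charpoly = X ^ 3 * ((X - C a) * (X - C b) * (X - C c)) := by
  obtain ⟨p, e, D, W, q, hp0, hp1, he, hD, hW, hDpos, hq0, hq, h1, h2, h3⟩ :=
    exists_params_s17 ha hab hbc
  have hp2 : 0 < 1 - p ^ 2 := by nlinarith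
  have ha' : a = c - D * (1 + 2 * e ^ 2) := by
    rw [hD, div_mul_cancel₀ _ (by positivity)]; ring
  have hb' : b = c - W * (1 + e ^ 2) := by
    rw [hW, div_mul_cancel₀ _ (by positivity)]; ring
  set z := e * D / q with hz
  set t := q / (3 * p) with ht
  set y := -(e * q) / (2 * (1 - p ^ 2)) with hy
  have hz0 : z ≠ 0 := by positivity
  have ht0 : t ≠ 0 := by positivity
  have hy0 : y ≠ 0 := div_ne_zero (neg_ne_zero.2 (by positivity)) (by positivity)
  -- The off-diagonal entries of `V Vᵀ`.
  have h12 : 2 * t * (p * y) = -(e * (D - W)) := by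
    rw [ht, hy]
    field_simp
    linear_combination (-1) * hq
  have h13 : 3 * (p * z * t) = e * D := by
    rw [ht, hz]; field_simp
  have h23 : 2 * z * y * (1 - p ^ 2) = -(e ^ 2 * D) := by
    rw [hy, hz]; field_simp
  rw [← sub_pos] at h1 h2 h3
  set V := gramFactor √(c - D - W * e ^ 2 - ((p * z) ^ 2 + 4 * t ^ 2))
    √(c - D * e ^ 2 - W - ((2 * z) ^ 2 + (p * y) ^ 2))
    √(c - D * e ^ 2 - (y ^ 2 + t ^ 2 + (2 * p * z) ^ 2)) p z y t with hV
  have hVV : V * Vᵀ = !![c - D - W * e ^ 2, -(e * (D - W)), -(e * D);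
      -(e * (D - W)), c - D * e ^ 2 - W, -(e ^ 2 * D);
      -(e * D), -(e ^ 2 * D), c - D * e ^ 2] := by
    have s1 := Real.mul_self_sqrt h1.le
    have s2 := Real.mul_self_sqrt h2.le
    have s3 := Real.mul_self_sqrt h3.le
    ext i j
    fin_cases i <;> fin_cases j <;>
      simp [hV, gramFactor, Matrix.mul_apply, Fin.sum_univ_succ, s1, s2, s3] <;>
      first
      | ring1
      | linear_combination h12
      | linear_combination h23
      | linear_combination -h13
  refine ⟨Vᵀ * V, inS_gramFactor (Real.sqrt_pos.2 h1).ne' (Real.sqrt_pos.2 h2).ne'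
    (Real.sqrt_pos.2 h3).ne' hp0.ne' hz0 hy0 ht0, ?_⟩
  rw [Matrix.charpoly_mul_comm_of_le _ _ (by simp), hVV]
  congr 1
  refine Polynomial.funext fun x => ?_
  rw [eval_charpoly_eq_det, Matrix.det_fin_three]
  simp
  rw [ha', hb']
  ring

theorem exists_inS_charpoly {l a b c : ℝ} (ha : l < a) (hab : a < b) (hbc : b ≤ c) :
    ∃ M : Matrix (Fin 6) (Fin 6) ℝ, inS G151 M ∧
      M.charpoly = (X - C l) ^ 3 * ((X - C a) * (X - C b) * (X - C c)) := by
  obtain ⟨M, ⟨hs, hM⟩, hc⟩ := exists_inS_charpoly_of_pos (a := a - l) (b := b - l) (c := c - l)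
    (by linarith) (by linarith) (by linarith)
  refine ⟨M - scalar (Fin 6) (-l), ⟨?_, fun i j hij => ?_⟩, ?_⟩
  · exact hs.sub (by simp [Matrix.IsSymm])
  · rw [← hM i j hij]
    simp [hij]
  · rw [Matrix.charpoly_sub_scalar, hc]
    refine Polynomial.funext fun x => ?_
    simp
    ring

/-- The mirror image of `exists_inS_charpoly` under `M ↦ -M`. -/
theorem exists_inS_charpoly' {l a b c : ℝ} (ha : a < l) (hab : b < a) (hbc : c ≤ b) :
    ∃ M : Matrix (Fin 6) (Fin 6) ℝ, inS G151 M ∧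
      M.charpoly = (X - C l) ^ 3 * ((X - C a) * (X - C b) * (X - C c)) := by
  obtain ⟨M, ⟨hs, hM⟩, hc⟩ := exists_inS_charpoly (l := -l) (a := -a) (b := -b) (c := -c)
    (by linarith) (by linarith) (by linarith)
  refine ⟨-M, ⟨hs.neg, fun i j hij => ?_⟩, ?_⟩
  · rw [← hM i j hij]
    simp
  · rw [charpoly_neg_fin_six, hc]
    refine Polynomial.funext fun x => ?_
    simp
    ring


theorem G151_attains_312_213_3111_1113_spectrally_arbitrary :
    (∀ l₁ l₂ l₃ : ℝ, l₁ < l₂ → l₂ < l₃ →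
      (∃ M : Matrix (Fin 6) (Fin 6) ℝ, inS G151 M ∧
        M.charpoly = (X - C l₁) ^ 3 * (X - C l₂) * (X - C l₃) ^ 2) ∧
      (∃ M' : Matrix (Fin 6) (Fin 6) ℝ, inS G151 M' ∧
        M'.charpoly = (X - C l₁) ^ 2 * (X - C l₂) * (X - C l₃) ^ 3)) ∧
    (∀ l₁ l₂ l₃ l₄ : ℝ, l₁ < l₂ → l₂ < l₃ → l₃ < l₄ →
      (∃ N : Matrix (Fin 6) (Fin 6) ℝ, inS G151 N ∧
        N.charpoly = (X - C l₁) ^ 3 * (X - C l₂) * (X - C l₃) * (X - C l₄)) ∧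
      (∃ N' : Matrix (Fin 6) (Fin 6) ℝ, inS G151 N' ∧
        N'.charpoly = (X - C l₁) * (X - C l₂) * (X - C l₃) * (X - C l₄) ^ 3)) := by
  refine ⟨fun l₁ l₂ l₃ h₁ h₂ => ⟨?_, ?_⟩, fun l₁ l₂ l₃ l₄ h₁ h₂ h₃ => ⟨?_, ?_⟩⟩
  · obtain ⟨M, hM, hc⟩ := exists_inS_charpoly h₁ h₂ le_rfl
    exact ⟨M, hM, by rw [hc]; ring⟩
  · obtain ⟨M, hM, hc⟩ := exists_inS_charpoly' h₂ h₁ le_rfl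
    exact ⟨M, hM, by rw [hc]; ring⟩
  · obtain ⟨M, hM, hc⟩ := exists_inS_charpoly h₁ h₂ h₃.le
    exact ⟨M, hM, by rw [hc]; ring⟩
  · obtain ⟨M, hM, hc⟩ := exists_inS_charpoly' h₃ h₂ h₁.le
    exact ⟨M, hM, by rw [hc]; ring⟩
end

section
/- Let G be a connected simple graph on 6 vertices that is not the complete graph K_6, and suppose there exists a matrix M ∈ S(G) with exactly two distinct eigenvalues, each of multiplicity 3. Then for all real numbers λ_0 and μ_1 ≤ μ_2 ≤ μ_3 with λ_0 < μ_1, there exists a matrix N ∈ S(G) whose characteristic polynomial equals (X − λ_0)^3 (X − μ_1)(X − μ_2)(X − μ_3), and there exists a matrix N' ∈ S(G) whose characteristic polynomial equals (X − μ_1)(X − μ_2)(X − μ_3)(X − λ_0')^3 for any μ_3 < λ_0'. In particular, G attains each of the ordered multiplicity lists (1,1,1,3), (1,2,3), (2,1,3), (3,1,2), (3,2,1), and (3,1,1,1) with arbitrary spectrum. -/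
/-!
An affine image `R` of the given two-eigenvalue matrix is an orthogonal projection of rank 3 with
`R ∈ S(G)`. As `G` is not complete there are distinct `i`, `j` with `R i j = 0`, and as `G` is
connected no row of `R` vanishes, so `R i i, R j j > 0` (`diag_pos_of_idem`). For the diagonal
matrix `S` with `S² = 1 + s eᵢeᵢᵀ + t eⱼeⱼᵀ` and `s, t ≥ 0`, the matrix `S R S` has the
off-diagonal pattern of `R` and the characteristic polynomial of
`R S² = R + s (R eᵢ) eᵢᵀ + t (R eⱼ) eⱼᵀ`. Since `R eᵢ` and `R eⱼ` are eigenvectors of `R` for the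
eigenvalue 1 and `R i j = 0`, Brauer's rank-one perturbation formula
(`charpoly_add_vecMulVec`) applies twice and moves two of the three eigenvalues 1 to `1 + s R i i`
and `1 + t R j j`, both arbitrary in `[1, ∞)`, while `R S²` keeps the triple eigenvalue 0. Finally
`k S R S + l` has spectrum `l` (three times), `l + k`, `l + k (1 + s R i i)`, `l + k (1 + t R j j)`.
The `μ` closest to `l` plays the role of `l + k`; a positive `k` gives the first
half of the theorem and a negative `k` the second.
-/

open Polynomial Matrix

/-- Brauer's formula: if `A w = θ w`, adding `w vᵀ` to `A` replaces one eigenvalue `θ` by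
`θ + v ⬝ w` and keeps the others. -/
lemma charpoly_add_vecMulVec {n : Type*} [Fintype n] [DecidableEq n] (A : Matrix n n ℝ)
    (w v : n → ℝ) (θ : ℝ) (hw : A *ᵥ w = θ • w) :
    (X - C θ) * (A + vecMulVec w v).charpoly = A.charpoly * (X - C (θ + v ⬝ᵥ w)) := by
  apply Polynomial.eq_of_infinite_eval_eq
  refine Set.Infinite.mono (s := {θ}ᶜ) ?_ (Set.finite_singleton θ).infinite_compl
  intro x hx
  have hx' : x - θ ≠ 0 := sub_ne_zero.2 hx
  -- As `(x - A) w = (x - θ) w`, the factor `x - A` splits off without being invertible.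
  have hfac : Matrix.scalar n x - (A + vecMulVec w v)
      = (Matrix.scalar n x - A) *
        (1 + replicateCol Unit (-(x - θ)⁻¹ • w) * replicateRow Unit v) := by
    rw [← vecMulVec_eq, smul_vecMulVec, Matrix.mul_add, Matrix.mul_one, Matrix.mul_smul,
      mul_vecMulVec, Matrix.sub_mulVec, hw]
    have : (Matrix.scalar n x) *ᵥ w - θ • w = (x - θ) • w := by
      rw [sub_smul]; congr 1
      ext i; simp [Matrix.mulVec_diagonal]
    rw [this, smul_vecMulVec, smul_smul, neg_mul, inv_mul_cancel₀ hx']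
    rw [neg_one_smul]
    abel
  simp only [Set.mem_ofPred_eq, eval_mul, eval_charpoly, eval_sub, eval_X, eval_C]
  rw [hfac, det_mul, det_one_add_replicateCol_mul_replicateRow, dotProduct_smul, smul_eq_mul]
  field_simp
  ring

lemma eval_charpoly_affine {n : Type*} [Fintype n] [DecidableEq n] (A : Matrix n n ℝ)
    (r c x : ℝ) (hr : r ≠ 0) :
    (r • A + c • (1 : Matrix n n ℝ)).charpoly.eval x
      = r ^ Fintype.card n * A.charpoly.eval ((x - c) / r) := by
  rw [eval_charpoly, eval_charpoly, ← det_smul]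
  congr 1
  ext i j
  by_cases h : i = j
  · subst h; simp; field_simp; ring
  · simp [h]

lemma mul_eq_zero_of_charpoly {n : Type*} [Fintype n] [DecidableEq n] {M : Matrix n n ℝ}
    (hM : M.IsSymm) {a b : ℝ} {p q : ℕ} (h : M.charpoly = (X - C a) ^ p * (X - C b) ^ q) :
    (M - a • (1 : Matrix n n ℝ)) * (M - b • (1 : Matrix n n ℝ)) = 0 := by
  have hH : M.IsHermitian := by
    rw [Matrix.IsHermitian, conjTranspose_eq_transpose_of_trivial]; exact hM
  have hev : ∀ i, (hH.eigenvalues i - a) * (hH.eigenvalues i - b) = 0 := by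
    intro i
    have h1 : M.charpoly.eval (hH.eigenvalues i) = 0 := by
      rw [hH.charpoly_eq, eval_prod]
      exact Finset.prod_eq_zero (Finset.mem_univ i) (by simp)
    rw [h] at h1
    simp only [eval_mul, eval_pow, eval_sub, eval_X, eval_C] at h1
    rcases mul_eq_zero.1 h1 with h1 | h1
    · rw [eq_zero_of_pow_eq_zero h1, zero_mul]
    · rw [eq_zero_of_pow_eq_zero h1, mul_zero]
  have hsub : ∀ c : ℝ, M - c • (1 : Matrix n n ℝ) =
      Unitary.conjStarAlgAut ℝ _ hH.eigenvectorUnitary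
        (diagonal fun i => hH.eigenvalues i - c) := by
    intro c
    have hd : (diagonal fun i => hH.eigenvalues i - c) =
        diagonal (RCLike.ofReal ∘ hH.eigenvalues) - c • (1 : Matrix n n ℝ) := by
      ext i j
      by_cases hij : i = j
      · subst hij; simp
      · simp [hij]
    rw [hd, map_sub, ← hH.spectral_theorem, map_smul, map_one]
  rw [hsub, hsub, ← map_mul, diagonal_mul_diagonal]
  simp [hev]

lemma diag_pos_of_idem {n : Type*} [Fintype n] {R : Matrix n n ℝ} (hs : R.IsSymm)
    (hi : R * R = R) {i j : n} (hij : R i j ≠ 0) : 0 < R i i := by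
  have h : R i i = ∑ k, R i k ^ 2 := by
    conv_lhs => rw [← hi, Matrix.mul_apply]
    refine Finset.sum_congr rfl fun k _ => ?_
    rw [hs.apply i k, sq]
  rw [h]
  exact Finset.sum_pos' (fun k _ => sq_nonneg _) ⟨j, Finset.mem_univ _, by positivity⟩

/-- Congruence of an idempotent `R` by the diagonal matrix with square `1 + s eᵢeᵢᵀ + t eⱼeⱼᵀ`
moves two eigenvalues 1 to `1 + s R i i` and `1 + t R j j`, provided `R i j = 0`. -/
lemma charpoly_scaled {n : Type*} [Fintype n] [DecidableEq n] {R : Matrix n n ℝ}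
    (hi : R * R = R) {i j : n} (hne : i ≠ j) (hij : R i j = 0) {s t : ℝ} {σ : n → ℝ}
    (hσ : ∀ k, σ k * σ k = 1 + (if k = i then s else 0) + (if k = j then t else 0)) :
    (X - C 1) ^ 2 * (diagonal σ * R * diagonal σ).charpoly
      = R.charpoly * (X - C (1 + s * R i i)) * (X - C (1 + t * R j j)) := by
  have key : (diagonal σ * R * diagonal σ).charpoly
      = (R + vecMulVec (R.col i) (Pi.single i s) + vecMulVec (R.col j) (Pi.single j t)).charpoly := by
    rw [Matrix.mul_assoc, Matrix.charpoly_mul_comm, Matrix.mul_assoc, diagonal_mul_diagonal]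
    congr 1
    ext k l
    rw [mul_diagonal, hσ]
    simp only [Matrix.add_apply, vecMulVec_apply, Matrix.col_apply, Pi.single_apply]
    split_ifs <;> subst_vars <;> ring
  have hcol : ∀ l, R *ᵥ R.col l = R.col l := by
    intro l
    ext k
    conv_rhs => rw [← hi]
    rfl
  have h1 := charpoly_add_vecMulVec R (R.col i) (Pi.single i s) 1 (by rw [hcol, one_smul])
  have h2 := charpoly_add_vecMulVec (R + vecMulVec (R.col i) (Pi.single i s))
    (R.col j) (Pi.single j t) 1 (by
      rw [Matrix.add_mulVec, hcol, vecMulVec_mulVec]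
      simp [hij])
  simp only [single_dotProduct, Matrix.col_apply] at h1 h2
  rw [key, sq, mul_assoc, h2, ← mul_assoc, h1]

/-- The common core of both halves: `m` is the eigenvalue other than `l` closest to `l`, and the
sign of `m - l` says on which side of `l` the remaining spectrum lies. -/
lemma exists_inS_of_idem {G : SimpleGraph (Fin 6)} {R : Matrix (Fin 6) (Fin 6) ℝ}
    (hR : inS G R) (hi : R * R = R) (hchar : R.charpoly = X ^ 3 * (X - C 1) ^ 3)
    (hconn : G.Connected) (hK6 : G ≠ ⊤) {l m p q : ℝ} (hk : m - l ≠ 0)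
    (hp : 0 ≤ (p - m) / (m - l)) (hq : 0 ≤ (q - m) / (m - l)) :
    ∃ N : Matrix (Fin 6) (Fin 6) ℝ, inS G N ∧
      N.charpoly = (X - C l) ^ 3 * ((X - C m) * (X - C p) * (X - C q)) := by
  obtain ⟨i, j, hne, hnadj⟩ : ∃ i j, i ≠ j ∧ ¬ G.Adj i j := by
    by_contra! h
    exact hK6 (by ext a b; exact ⟨fun h => h.ne, fun hab => h a b hab⟩)
  have hij : R i j = 0 := by
    by_contra h
    exact hnadj ((hR.2 i j hne).1 h)
  have hpos : ∀ k, 0 < R k k := by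
    intro k
    obtain ⟨k', hk'⟩ := hconn.preconnected.exists_adj_of_nontrivial k
    exact diag_pos_of_idem hR.1 hi ((hR.2 k k' hk'.ne).2 hk')
  set s := (p - m) / (m - l) / R i i with hs
  set t := (q - m) / (m - l) / R j j with ht
  have hs0 : 0 ≤ s := div_nonneg hp (hpos i).le
  have ht0 : 0 ≤ t := div_nonneg hq (hpos j).le
  set σ : Fin 6 → ℝ := fun k =>
    √(1 + (if k = i then s else 0) + (if k = j then t else 0)) with hσdef
  have hσpos : ∀ k, 0 < 1 + (if k = i then s else 0) + (if k = j then t else 0) := by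
    intro k; split_ifs <;> positivity
  have hσ0 : ∀ k, σ k ≠ 0 := fun k => (Real.sqrt_pos.2 (hσpos k)).ne'
  have hσ : ∀ k, σ k * σ k = 1 + (if k = i then s else 0) + (if k = j then t else 0) :=
    fun k => Real.mul_self_sqrt (hσpos k).le
  have hT : (diagonal σ * R * diagonal σ).charpoly
      = X ^ 3 * (X - C 1) * (X - C (1 + s * R i i)) * (X - C (1 + t * R j j)) := by
    have h := charpoly_scaled hi hne hij hσ
    rw [hchar] at h
    apply mul_left_cancel₀ (pow_ne_zero 2 (X_sub_C_ne_zero (1 : ℝ)))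
    rw [h]; ring
  refine ⟨(m - l) • (diagonal σ * R * diagonal σ) + l • 1, ⟨?_, ?_⟩, ?_⟩
  · ext a b
    have := hR.1.apply a b
    by_cases hab : a = b
    · subst hab; rfl
    · simp only [Matrix.transpose_apply, Matrix.add_apply, Matrix.smul_apply, mul_diagonal,
        diagonal_mul, this, smul_eq_mul, Matrix.one_apply_ne hab,
        Matrix.one_apply_ne (Ne.symm hab)]
      ring
  · intro a b hab
    rw [← hR.2 a b hab]
    simp [hab, hk, hσ0]
  · apply Polynomial.funext
    intro x
    rw [eval_charpoly_affine _ _ _ _ hk, hT]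
    have h1 : s * R i i = (p - m) / (m - l) := div_mul_cancel₀ _ (hpos i).ne'
    have h2 : t * R j j = (q - m) / (m - l) := div_mul_cancel₀ _ (hpos j).ne'
    rw [h1, h2]
    simp only [eval_mul, eval_pow, eval_sub, eval_X, eval_C, Fintype.card_fin]
    field_simp
    ring

theorem two_eigenvalue_graph_attains (G : SimpleGraph (Fin 6))
    (hconn : G.Connected) (hK6 : G ≠ ⊤)
    (hex : ∃ (M : Matrix (Fin 6) (Fin 6) ℝ) (a b : ℝ), a < b ∧ inS G M ∧
      M.charpoly = (X - C a) ^ 3 * (X - C b) ^ 3) :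
    (∀ l₀ μ₁ μ₂ μ₃ : ℝ, l₀ < μ₁ → μ₁ ≤ μ₂ → μ₂ ≤ μ₃ →
      ∃ N : Matrix (Fin 6) (Fin 6) ℝ, inS G N ∧
        N.charpoly = (X - C l₀) ^ 3 * ((X - C μ₁) * (X - C μ₂) * (X - C μ₃))) ∧
    (∀ μ₁ μ₂ μ₃ l₀ : ℝ, μ₁ ≤ μ₂ → μ₂ ≤ μ₃ → μ₃ < l₀ →
      ∃ N' : Matrix (Fin 6) (Fin 6) ℝ, inS G N' ∧
        N'.charpoly = (X - C μ₁) * (X - C μ₂) * (X - C μ₃) * (X - C l₀) ^ 3) := by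
  obtain ⟨M, a, b, hab, hM, hchar⟩ := hex
  have hba : b - a ≠ 0 := (sub_pos.2 hab).ne'
  set R : Matrix (Fin 6) (Fin 6) ℝ :=
    (b - a)⁻¹ • M + (-a / (b - a)) • (1 : Matrix (Fin 6) (Fin 6) ℝ) with hRdef
  have hR : inS G R := by
    refine ⟨?_, fun i j hij => ?_⟩
    · exact (hM.1.smul _).add (Matrix.isSymm_one.smul _)
    · rw [← hM.2 i j hij]
      simp [hRdef, hij, hba]
  have hRM : R = (b - a)⁻¹ • (M - a • (1 : Matrix (Fin 6) (Fin 6) ℝ)) := by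
    rw [hRdef]
    ext i j
    simp only [Matrix.add_apply, Matrix.sub_apply, Matrix.smul_apply, smul_eq_mul]
    field_simp
    ring
  have hR1 : R - 1 = (b - a)⁻¹ • (M - b • (1 : Matrix (Fin 6) (Fin 6) ℝ)) := by
    rw [hRM]
    ext i j
    simp only [Matrix.sub_apply, Matrix.smul_apply, smul_eq_mul]
    field_simp
    ring
  have hi : R * R = R := by
    have h : R * (R - 1) = 0 := by
      rw [hR1, hRM, Matrix.smul_mul, Matrix.mul_smul, mul_eq_zero_of_charpoly hM.1 hchar]
      simp
    rwa [Matrix.mul_sub, Matrix.mul_one, sub_eq_zero] at h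
  have hRchar : R.charpoly = X ^ 3 * (X - C 1) ^ 3 := by
    apply Polynomial.funext
    intro x
    rw [hRdef, eval_charpoly_affine _ _ _ _ (inv_ne_zero hba), hchar]
    simp only [eval_mul, eval_pow, eval_sub, eval_X, eval_C, Fintype.card_fin]
    field_simp
    ring
  constructor
  · intro l₀ μ₁ μ₂ μ₃ h0 h1 h2
    exact exists_inS_of_idem hR hi hRchar hconn hK6 (sub_pos.2 h0).ne'
      (div_nonneg (by linarith) (by linarith)) (div_nonneg (by linarith) (by linarith))
  · intro μ₁ μ₂ μ₃ l₀ h1 h2 h0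
    obtain ⟨N, hN, hNc⟩ := exists_inS_of_idem (m := μ₃) (p := μ₁) (q := μ₂) hR hi hRchar
      hconn hK6 (sub_neg.2 h0).ne
      (div_nonneg_of_nonpos (by linarith) (by linarith))
      (div_nonneg_of_nonpos (by linarith) (by linarith))
    exact ⟨N, hN, by rw [hNc]; ring⟩
end

section
/- Let m, n ≥ 3 be integers and let K_{m,n} be the complete bipartite graph with parts of sizes m and n. Then: (a) there exists a matrix M ∈ S(K_{m,n}) whose characteristic polynomial equals X^{m+n−2} (X^2 − mn) (for example the adjacency matrix), so K_{m,n} attains the ordered multiplicity list (1, m+n−2, 1); and (b) if M ∈ S(K_{m,n}) and λ_1 < λ_2 < λ_3 are real numbers such that the characteristic polynomial of M equals (X − λ_1)(X − λ_2)^{m+n−2}(X − λ_3), then λ_3 − λ_2 = λ_2 − λ_1. In particular, K_{m,n} does not attain the ordered multiplicity list (1, m+n−2, 1) with arbitrary spectrum. -/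
/-!
Part (a): the adjacency matrix of `K_{m,n}` factors as `U * W` through a two-dimensional space,
where the columns of `U` and the rows of `W` are the indicator vectors of the two parts. Then
`W * U = !![0, n; m, 0]` has characteristic polynomial `X ^ 2 - mn`, and
`Matrix.charpoly_mul_comm_of_le` supplies the factor `X ^ (m + n - 2)`.

Part (b): put `B = M - l₂ • 1`. Being symmetric with `0` as an `(m + n - 2)`-fold root of its
characteristic polynomial, `B` has rank at most `2`, so all its `3 × 3` minors vanish. For distinct
`i, j, k` in one part and distinct `x, y` in the other, the minor with rows `i, j, x` and
columns `i, k, y` equals `-(B i i * B j y * B x k)`, and the last two factors are nonzero; hence the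
diagonal of `B` vanishes (`diag_eq_zero_of_rank_le_two`). Therefore
`0 = trace B = (l₁ - l₂) + (l₃ - l₂)`.
-/

open Polynomial Matrix

lemma diag_eq_zero_of_rank_le_two {V : Type*} [Fintype V] (B : Matrix V V ℝ)
    (hB : B.rank ≤ 2) {i j k x y : V} (hik : B i k = 0) (hji : B j i = 0) (hjk : B j k = 0)
    (hxy : B x y = 0) (hjy : B j y ≠ 0) (hxk : B x k ≠ 0) : B i i = 0 := by
  have hdet : (B.submatrix ![i, j, x] ![i, k, y]).det = 0 := by
    by_contra h
    have h3 := rank_of_isUnit _ ((Matrix.isUnit_iff_isUnit_det _).2 (isUnit_iff_ne_zero.2 h))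
    have hle := rank_submatrix_le B ![i, j, x] ![i, k, y]
    rw [Fintype.card_fin] at h3
    omega
  rw [det_fin_three] at hdet
  simpa [hik, hji, hjk, hxy, hjy, hxk] using hdet

/-- Holds because the rank of a real symmetric matrix counts the nonzero roots of its
characteristic polynomial with multiplicity; here `a` and `b` are the only possible ones. -/
lemma rank_le_two_of_charpoly {V : Type*} [Fintype V] [DecidableEq V] (B : Matrix V V ℝ)
    (hB : B.IsHermitian) {a b : ℝ} {N : ℕ}
    (hroots : B.charpoly.roots = a ::ₘ b ::ₘ Multiset.replicate N 0) : B.rank ≤ 2 := by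
  classical
  have hcard : B.rank = Multiset.countP (fun t : ℝ => t ≠ 0) B.charpoly.roots := by
    rw [hB.rank_eq_card_non_zero_eigs, hB.roots_charpoly_eq_eigenvalues, Multiset.countP_map,
      Fintype.card_subtype]
    rfl
  have h0 : Multiset.countP (fun t : ℝ => t ≠ 0) (Multiset.replicate N 0) = 0 := by
    rw [Multiset.countP_eq_zero]
    intro t ht
    simpa using Multiset.eq_of_mem_replicate ht
  rw [hcard, hroots, Multiset.countP_cons, Multiset.countP_cons, h0]
  split_ifs <;> omega

lemma exists_inS_completeBipartiteGraph (m n : ℕ) (hmn : 2 ≤ m + n) :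
    ∃ M : Matrix (Fin m ⊕ Fin n) (Fin m ⊕ Fin n) ℝ,
      inS (completeBipartiteGraph (Fin m) (Fin n)) M ∧
      M.charpoly = X ^ (m + n - 2) * (X ^ 2 - C ((m : ℝ) * n)) := by
  let U : Matrix (Fin m ⊕ Fin n) (Fin 2) ℝ :=
    Matrix.of (Sum.elim (fun _ => ![1, 0]) (fun _ => ![0, 1]))
  let W : Matrix (Fin 2) (Fin m ⊕ Fin n) ℝ :=
    Matrix.of ![Sum.elim (fun _ => 0) (fun _ => 1), Sum.elim (fun _ => 1) (fun _ => 0)]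
  refine ⟨U * W, ⟨?_, ?_⟩, ?_⟩
  · ext i j
    rcases i with i | i <;> rcases j with j | j <;> simp [U, W, mul_apply]
  · intro i j _
    rcases i with i | i <;> rcases j with j | j <;> simp [U, W, mul_apply]
  · have hWU : W * U = !![0, (n : ℝ); (m : ℝ), 0] := by
      ext i j
      fin_cases i <;> fin_cases j <;> simp [U, W, mul_apply]
    rw [charpoly_mul_comm_of_le U W (by simpa using hmn), hWU, charpoly_fin_two]
    simp [trace_fin_two, det_fin_two, mul_comm, sub_eq_add_neg]

theorem completeBipartite_1mn21_not_spectrally_arbitrary (m n : ℕ)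
    (hm : 3 ≤ m) (hn : 3 ≤ n) :
    (∃ M : Matrix (Fin m ⊕ Fin n) (Fin m ⊕ Fin n) ℝ,
      inS (completeBipartiteGraph (Fin m) (Fin n)) M ∧
      M.charpoly = X ^ (m + n - 2) * (X ^ 2 - C ((m : ℝ) * n))) ∧
    (∀ (M : Matrix (Fin m ⊕ Fin n) (Fin m ⊕ Fin n) ℝ) (l₁ l₂ l₃ : ℝ),
      inS (completeBipartiteGraph (Fin m) (Fin n)) M → l₁ < l₂ → l₂ < l₃ →
      M.charpoly = (X - C l₁) * (X - C l₂) ^ (m + n - 2) * (X - C l₃) →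
      l₃ - l₂ = l₂ - l₁) := by
  refine ⟨exists_inS_completeBipartiteGraph m n (by omega), ?_⟩
  intro M l₁ l₂ l₃ hM _ _ hchar
  obtain ⟨hsymm, hadj⟩ := hM
  set B : Matrix (Fin m ⊕ Fin n) (Fin m ⊕ Fin n) ℝ := M - scalar _ l₂ with hBdef
  have hoff : ∀ p q, p ≠ q → B p q = M p q := fun p q hpq => by simp [B, hpq]
  have hzero : ∀ p q, p ≠ q → ¬ (completeBipartiteGraph (Fin m) (Fin n)).Adj p q → B p q = 0 := by
    intro p q hpq h
    rw [hoff p q hpq]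
    exact not_not.1 fun h' => h ((hadj p q hpq).1 h')
  have hne : ∀ p q, (completeBipartiteGraph (Fin m) (Fin n)).Adj p q → B p q ≠ 0 := by
    intro p q h
    rw [hoff p q h.ne]
    exact (hadj p q h.ne).2 h
  have hBherm : B.IsHermitian := by
    ext p q
    have hpq : M q p = M p q := hsymm.apply p q
    by_cases h : p = q
    · subst h; simp
    · simp [B, h, Ne.symm h, hpq]
  have hBroots : B.charpoly.roots =
      (l₁ - l₂) ::ₘ (l₃ - l₂) ::ₘ Multiset.replicate (m + n - 2) 0 := by
    have hB : B.charpoly = (((l₁ - l₂) ::ₘ (l₃ - l₂) ::ₘ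
        Multiset.replicate (m + n - 2) 0).map fun t => X - C t).prod := by
      rw [hBdef, charpoly_sub_scalar, hchar]
      simp
      ring
    rw [hB, roots_multiset_prod_X_sub_C]
  have hrank : B.rank ≤ 2 := rank_le_two_of_charpoly B hBherm hBroots
  -- Each index of a part has two further distinct companions; this is where `m, n ≥ 3` enters.
  have hthree : ∀ r : ℕ, 3 ≤ r → ∀ i : Fin r, ∃ j k : Fin r, i ≠ j ∧ i ≠ k ∧ j ≠ k := by
    intro r hr i
    have hcard : 1 < (Finset.univ.erase i).card := by
      rw [Finset.card_erase_of_mem (Finset.mem_univ i), Finset.card_univ, Fintype.card_fin]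
      omega
    obtain ⟨j, k, hji, hki, hjk⟩ := Finset.one_lt_card_iff.1 hcard
    exact ⟨j, k, (Finset.ne_of_mem_erase hji).symm, (Finset.ne_of_mem_erase hki).symm, hjk⟩
  have hdiag : ∀ p, B p p = 0 := by
    rintro (i | i)
    · obtain ⟨j, k, hij, hik, hjk⟩ := hthree m hm i
      obtain ⟨y, _, hxy, -, -⟩ := hthree n hn ⟨0, by omega⟩
      exact diag_eq_zero_of_rank_le_two B hrank (j := .inl j) (k := .inl k)
        (x := .inr ⟨0, by omega⟩) (y := .inr y)
        (hzero _ _ (by simpa using hik) (by simp)) (hzero _ _ (by simpa using hij.symm) (by simp))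
        (hzero _ _ (by simpa using hjk) (by simp)) (hzero _ _ (by simpa using hxy) (by simp))
        (hne _ _ (by simp)) (hne _ _ (by simp))
    · obtain ⟨j, k, hij, hik, hjk⟩ := hthree n hn i
      obtain ⟨y, _, hxy, -, -⟩ := hthree m hm ⟨0, by omega⟩
      exact diag_eq_zero_of_rank_le_two B hrank (j := .inr j) (k := .inr k)
        (x := .inl ⟨0, by omega⟩) (y := .inl y)
        (hzero _ _ (by simpa using hik) (by simp)) (hzero _ _ (by simpa using hij.symm) (by simp))
        (hzero _ _ (by simpa using hjk) (by simp)) (hzero _ _ (by simpa using hxy) (by simp))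
        (hne _ _ (by simp)) (hne _ _ (by simp))
  have htr : B.trace = (l₁ - l₂) + (l₃ - l₂) := by
    rw [trace_eq_sum_roots_charpoly_of_splits hBherm.splits_charpoly, hBroots]
    simp
  have htr0 : B.trace = 0 := Finset.sum_eq_zero fun p _ => hdiag p
  linarith
end
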